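/- The syntactic precongruence induced by the even-palindrome language is the identity on words (the language is domain-shattering): let Σ be a type containing two distinct elements. Then for all words u, u' : List Σ, the following are equivalent: (a) for all words s, t : List Σ, s ++ u ++ t ∈ O_pal implies s ++ u' ++ t ∈ O_pal; (b) u = u'. -/

import Mathlib

/-- The language of even-length palindromes over `α`. -/
def Opal (α : Type*) : Set (List α) :=
  {x : List α | ∃ w : List α, x = w ++ w.reverse}

/-! For each letter `c`, the word `u c c uᴿ` is an even palindrome, hence so is `u' c c uᴿ`, and
reversing it gives `u' c c uᴿ = u c c u'ᴿ`. So one of `u`, `u'` is a prefix of the other; were it a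
proper prefix, the next letter of the longer word would be `c`, which is impossible for two distinct
values of `c`. -/

section Palindromes

variable {α : Type*} {p q x z : List α}

theorem palindrome_of_mem_opal (hx : x ∈ Opal α) : x.Palindrome := by
  obtain ⟨w, rfl⟩ := hx
  exact .of_reverse_eq (by simp)

theorem pair_mem_opal (c : α) : [c, c] ∈ Opal α :=
  ⟨[c], rfl⟩

theorem append_append_reverse_mem_opal (w : List α) (hz : z ∈ Opal α) :
    w ++ (z ++ w.reverse) ∈ Opal α := by
  obtain ⟨y, rfl⟩ := hz
  exact ⟨w ++ y, by simp⟩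

theorem append_append_reverse_comm_of_palindrome (hz : z.Palindrome)
    (h : (p ++ (z ++ q.reverse)).Palindrome) :
    p ++ (z ++ q.reverse) = q ++ (z ++ p.reverse) := by
  simpa [hz.reverse_eq] using h.reverse_eq.symm

end Palindromes

section CommonPrefix

variable {α : Type*} {a b : α} {p q r v w v' w' : List α}

theorem eq_nil_of_cons_eq_append_of_ne (hab : a ≠ b) (ha : a :: v = r ++ w)
    (hb : b :: v' = r ++ w') : r = [] := by
  cases r with
  | nil => rfl
  | cons c r =>
    have hac : a = c := (List.cons.inj ha).1
    have hbc : b = c := (List.cons.inj hb).1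
    exact absurd (hac.trans hbc.symm) hab

theorem eq_of_append_cons_eq_append_cons_of_ne (hab : a ≠ b) (ha : p ++ a :: v = q ++ a :: w)
    (hb : p ++ b :: v' = q ++ b :: w') : p = q := by
  obtain ⟨r, rfl, har⟩ | ⟨r, rfl, har⟩ := List.append_eq_append_iff.mp ha
  · have hbr : b :: v' = r ++ b :: w' := by simpa using hb
    simp [eq_nil_of_cons_eq_append_of_ne hab har hbr]
  · have hbr : b :: w' = r ++ b :: v' := by simpa using hb.symm
    simp [eq_nil_of_cons_eq_append_of_ne hab har hbr]

end CommonPrefix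

/-- The syntactic precongruence induced by the even-palindrome language is the
identity on words: the language is domain-shattering. -/
theorem palindrome_syntactic_precongruence_eq_id (α : Type*) (a b : α) (hab : a ≠ b) :
    ∀ u u' : List α,
      (∀ s t : List α, s ++ u ++ t ∈ Opal α → s ++ u' ++ t ∈ Opal α) ↔ u = u' := by
  intro u u'
  constructor
  · intro h
    have swap (c : α) : u' ++ ([c, c] ++ u.reverse) = u ++ ([c, c] ++ u'.reverse) := by
      have hmem : u' ++ ([c, c] ++ u.reverse) ∈ Opal α :=
        h [] ([c, c] ++ u.reverse) (append_append_reverse_mem_opal u (pair_mem_opal c))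
      exact append_append_reverse_comm_of_palindrome
        (palindrome_of_mem_opal (pair_mem_opal c)) (palindrome_of_mem_opal hmem)
    exact (eq_of_append_cons_eq_append_cons_of_ne hab (swap a) (swap b)).symm
  · rintro rfl s t hmem
    exact hmem
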